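/- Assume α ∈ ℤ and β ∈ ℤ, and let j be an integer with 0 ≤ j ≤ |β|−1. Then there exist rational functions u, v ∈ ℂ(X) such that for all n ∈ ℤ: u(n) = ((ε+β+1)_n/(ε+α+1)_n)·((−(n+ε))_j·(n+ε+α+β+1)_j)/(2^j·j!·(β+1)_j) and v(n) = ((ε+1)_n/(ε+α+β+1)_n)·((−(n+ε+α+β))_j·(n+ε+1)_j)/(2^j·j!·(−β+1)_j), and moreover u(−X−2ε−α−β−1) = (−1)^{α+β}·u(X) and v(−X−2ε−α−β−1) = (−1)^{α+β}·v(X) as identities in ℂ(X). -/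

import Mathlib

/-- Pochhammer symbol `(a)_n` for complex `a` and integer `n`. -/
noncomputable def poch (a : ℂ) (n : ℤ) : ℂ :=
  if 0 ≤ n then ∏ j ∈ Finset.range n.toNat, (a + (j : ℂ))
  else (∏ j ∈ Finset.range (-n).toNat, (a + (n : ℂ) + (j : ℂ)))⁻¹

/-- Gauss hypergeometric series `F(a,b;c;x)`. -/
noncomputable def hypF (a b c x : ℂ) : ℂ :=
  ∑' j : ℕ, (poch a (j : ℤ) * poch b (j : ℤ)) / ((j.factorial : ℂ) * poch c (j : ℤ)) * x ^ j

/-- The Jacobi difference operator `L_{α,β;ε}`. -/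
noncomputable def jacobiL (α β ε : ℂ) (f : ℤ → ℂ) (n : ℤ) : ℂ :=
  (2 * ((n : ℂ) + ε + 1) * ((n : ℂ) + ε + α + β + 1) /
      ((2 * (n : ℂ) + 2 * ε + α + β + 1) * (2 * (n : ℂ) + 2 * ε + α + β + 2))) * f (n + 1)
  + ((β ^ 2 - α ^ 2) /
      ((2 * (n : ℂ) + 2 * ε + α + β) * (2 * (n : ℂ) + 2 * ε + α + β + 2))) * f n
  + (2 * ((n : ℂ) + ε + α) * ((n : ℂ) + ε + β) /
      ((2 * (n : ℂ) + 2 * ε + α + β) * (2 * (n : ℂ) + 2 * ε + α + β + 1))) * f (n - 1)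

/-- The eigenvalue `λ_ε(n) = (n+ε)(n+ε+α+β+1)`. -/
noncomputable def lamE (α β ε : ℂ) (n : ℤ) : ℂ := ((n : ℂ) + ε) * ((n : ℂ) + ε + α + β + 1)

/-- The function `p^{α,β}_ε(n,z)` (case `α ∉ ℤ_{<0}`). -/
noncomputable def pStd (α β ε : ℂ) (n : ℤ) (z : ℂ) : ℂ :=
  (poch (ε + α + 1) n / poch (ε + 1) n) *
    hypF (-((n : ℂ) + ε)) ((n : ℂ) + ε + α + β + 1) (α + 1) ((1 - z) / 2)

/-- None of `ε, ε+α, ε+β, ε+α+β, 2ε+α+β` is an integer. -/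
def GoodParams (α β ε : ℂ) : Prop :=
  ∀ m : ℤ, ε ≠ (m : ℂ) ∧ ε + α ≠ (m : ℂ) ∧ ε + β ≠ (m : ℂ) ∧
    ε + α + β ≠ (m : ℂ) ∧ 2 * ε + α + β ≠ (m : ℂ)

/-!
For `x ∉ ℤ` the Pochhammer symbol is the Gamma quotient `(x)_n = Γ(x + n) / Γ(x)`, so splitting
`(x)_{n+d}` in two ways gives `(x)_n / (x + d)_n = (x)_d / (x + n)_d`. For an integer `d` the right
hand side is rational in `n`, and the factors of `(x + n)_d` are permuted up to sign by the
reflection `n ↦ -n - (2x + d - 1)`. The reflection also swaps `(-(n + e))_j` and `(n + f)_j` when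
its centre is `-(e + f) / 2`, so that their product is invariant.
-/

open Polynomial

section IsSkewRational

variable {K : Type*} [Field K] {s σ τ : K} {f g : ℤ → K}

/-- `f` is the restriction to `ℤ` of a rational function `u = N / D` without integer poles such that
`u(-X - s) = σ u(X)`; the functional equation is stated with denominators cleared. -/
def IsSkewRational (s σ : K) (f : ℤ → K) : Prop :=
  ∃ N D : K[X], (∀ n : ℤ, D.eval (n : K) ≠ 0) ∧
    (∀ n : ℤ, N.eval (n : K) / D.eval (n : K) = f n) ∧
    N.comp (-X - C s) * D = C σ * (N * D.comp (-X - C s))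

namespace IsSkewRational

theorem of_polynomial [Infinite K] {p : K[X]} (hp : ∀ z, p.eval (-z - s) = σ * p.eval z) :
    IsSkewRational s σ fun n ↦ p.eval (n : K) := by
  refine ⟨p, 1, by simp, by simp, Polynomial.funext fun z ↦ ?_⟩
  simpa using hp z

theorem const_mul (c : K) (hf : IsSkewRational s σ f) : IsSkewRational s σ fun n ↦ c * f n := by
  obtain ⟨N, D, hD, hND, hskew⟩ := hf
  refine ⟨C c * N, D, hD, fun n ↦ ?_, ?_⟩
  · rw [eval_mul, eval_C, mul_div_assoc, hND]
  · rw [mul_comp, C_comp]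
    linear_combination C c * hskew

theorem mul (hf : IsSkewRational s σ f) (hg : IsSkewRational s τ g) :
    IsSkewRational s (σ * τ) fun n ↦ f n * g n := by
  obtain ⟨N, D, hD, hND, hskew⟩ := hf
  obtain ⟨N', D', hD', hND', hskew'⟩ := hg
  refine ⟨N * N', D * D', fun n ↦ ?_, fun n ↦ ?_, ?_⟩
  · rw [eval_mul]
    exact mul_ne_zero (hD n) (hD' n)
  · rw [eval_mul, eval_mul, mul_div_mul_comm, hND, hND']
  · simp only [mul_comp, C_mul]
    linear_combination N'.comp (-X - C s) * D' * hskew +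
      C σ * (N * D.comp (-X - C s)) * hskew'

theorem inv (hσ : σ ≠ 0) (hf : IsSkewRational s σ f) (hf₀ : ∀ n, f n ≠ 0) :
    IsSkewRational s σ⁻¹ fun n ↦ (f n)⁻¹ := by
  obtain ⟨N, D, -, hND, hskew⟩ := hf
  refine ⟨D, N, fun n hN ↦ hf₀ n ?_, fun n ↦ ?_, ?_⟩
  · rw [← hND, hN, zero_div]
  · simp only [← hND, inv_div]
  · have hσ_inv : C σ⁻¹ * C σ = (1 : K[X]) := by rw [← C_mul, inv_mul_cancel₀ hσ, C_1]
    linear_combination -C σ⁻¹ * hskew - N * D.comp (-X - C s) * hσ_inv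

end IsSkewRational

end IsSkewRational

section Pochhammer

open Complex

variable {x : ℂ}

theorem poch_natCast (x : ℂ) (k : ℕ) : poch x k = (ascPochhammer ℂ k).eval x := by
  rw [poch, if_pos k.cast_nonneg, Int.toNat_natCast]
  induction k with
  | zero => simp
  | succ k ih => rw [Finset.prod_range_succ, ih, ascPochhammer_succ_eval]

theorem poch_neg_natCast (x : ℂ) (k : ℕ) : poch x (-k) = (poch (x - k) k)⁻¹ := by
  rcases k.eq_zero_or_pos with rfl | hk
  · simp [poch]
  · rw [poch, if_neg (by omega), poch, if_pos k.cast_nonneg]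
    simp [sub_eq_add_neg]

theorem Gamma_ne_zero_of_mem_integerComplement (hx : x ∈ integerComplement) : Gamma x ≠ 0 :=
  Gamma_ne_zero fun m hm ↦ hx ⟨-m, by simp [hm]⟩

theorem poch_natCast_eq_Gamma_div_Gamma (hx : x ∈ integerComplement) (k : ℕ) :
    poch x k = Gamma (x + k) / Gamma x := by
  rw [poch_natCast, Gamma_add_nat_div_Gamma_eq x fun m hm ↦ hx ⟨-m, by simp [hm]⟩]

theorem poch_eq_Gamma_div_Gamma (hx : x ∈ integerComplement) (n : ℤ) :
    poch x n = Gamma (x + n) / Gamma x := by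
  obtain ⟨k, rfl | rfl⟩ := n.eq_nat_or_neg
  · exact_mod_cast poch_natCast_eq_Gamma_div_Gamma hx k
  · have hxk : x - k ∈ integerComplement := by
      simpa [sub_eq_add_neg] using (add_intCast_mem_integerComplement (-k : ℤ)).mpr hx
    rw [poch_neg_natCast, poch_natCast_eq_Gamma_div_Gamma hxk, inv_div, sub_add_cancel]
    simp [sub_eq_add_neg]

theorem poch_ne_zero (hx : x ∈ integerComplement) (n : ℤ) : poch x n ≠ 0 := by
  rw [poch_eq_Gamma_div_Gamma hx]
  exact div_ne_zero
    (Gamma_ne_zero_of_mem_integerComplement ((add_intCast_mem_integerComplement n).mpr hx))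
    (Gamma_ne_zero_of_mem_integerComplement hx)

theorem poch_add (hx : x ∈ integerComplement) (m n : ℤ) :
    poch x (m + n) = poch x m * poch (x + m) n := by
  have hxm := (add_intCast_mem_integerComplement m).mpr hx
  rw [poch_eq_Gamma_div_Gamma hx, poch_eq_Gamma_div_Gamma hx, poch_eq_Gamma_div_Gamma hxm,
    mul_comm, div_mul_div_cancel₀ (Gamma_ne_zero_of_mem_integerComplement hxm), Int.cast_add,
    add_assoc]

theorem poch_div_poch_add_intCast (hx : x ∈ integerComplement) (d n : ℤ) :
    poch x n / poch (x + d) n = poch x d * (poch (x + n) d)⁻¹ := by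
  rw [← div_eq_mul_inv, div_eq_div_iff
    (poch_ne_zero ((add_intCast_mem_integerComplement d).mpr hx) n)
    (poch_ne_zero ((add_intCast_mem_integerComplement n).mpr hx) d),
    ← poch_add hx, ← poch_add hx, add_comm]

theorem ascPochhammer_eval_one_sub_natCast_sub {R : Type*} [CommRing R] (k : ℕ) (t : R) :
    (ascPochhammer R k).eval (1 - k - t) = (-1) ^ k * (ascPochhammer R k).eval t := by
  rw [show 1 - k - t = -(t + k - 1) by ring, ascPochhammer_eval_neg_eq_descPochhammer,
    descPochhammer_eval_eq_ascPochhammer, show t + k - 1 - k + 1 = t by ring]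

theorem isSkewRational_poch_add_natCast (x : ℂ) (k : ℕ) :
    IsSkewRational (2 * x + k - 1) ((-1) ^ k) fun n ↦ poch (x + n) k := by
  have hreflect (z : ℂ) : ((ascPochhammer ℂ k).comp (C x + X)).eval (-z - (2 * x + k - 1)) =
      (-1) ^ k * ((ascPochhammer ℂ k).comp (C x + X)).eval z := by
    simp only [eval_comp, eval_add, eval_C, eval_X]
    rw [← ascPochhammer_eval_one_sub_natCast_sub]
    ring_nf
  simpa [poch_natCast] using IsSkewRational.of_polynomial hreflect

theorem isSkewRational_poch_add_intCast (hx : x ∈ integerComplement) (d : ℤ) :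
    IsSkewRational (2 * x + d - 1) ((-1) ^ d) fun n ↦ poch (x + n) d := by
  obtain ⟨k, rfl | rfl⟩ := d.eq_nat_or_neg
  · exact_mod_cast isSkewRational_poch_add_natCast x k
  · have hne (n : ℤ) : poch (x - k + n) k ≠ 0 := by
      refine poch_ne_zero ?_ _
      simpa [sub_eq_add_neg, add_assoc] using
        (add_intCast_mem_integerComplement (-k + n : ℤ)).mpr hx
    have hinv := (isSkewRational_poch_add_natCast (x - k) k).inv (by simp) hne
    convert hinv using 1
    · push_cast
      ring
    · rw [zpow_neg, zpow_natCast]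
    · funext n
      rw [poch_neg_natCast, add_sub_right_comm]

theorem isSkewRational_poch_div_poch (hx : x ∈ integerComplement) (d : ℤ) :
    IsSkewRational (2 * x + d - 1) ((-1) ^ d) fun n ↦ poch x n / poch (x + d) n := by
  have hne (n : ℤ) : poch (x + n) d ≠ 0 :=
    poch_ne_zero ((add_intCast_mem_integerComplement n).mpr hx) d
  have hinv := (isSkewRational_poch_add_intCast hx d).inv (zpow_ne_zero d (by simp)) hne
  rw [← inv_zpow, inv_neg_one] at hinv
  simpa only [poch_div_poch_add_intCast hx] using hinv.const_mul (poch x d)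

theorem isSkewRational_poch_neg_mul_poch (e f : ℂ) (j : ℕ) :
    IsSkewRational (e + f) 1 fun n ↦ poch (-(n + e)) j * poch (n + f) j := by
  set Q : ℂ[X] := (ascPochhammer ℂ j).comp (-(X + C e)) * (ascPochhammer ℂ j).comp (X + C f)
    with hQ
  have hswap (z : ℂ) : Q.eval (-z - (e + f)) = 1 * Q.eval z := by
    simp only [hQ, eval_mul, eval_comp, eval_neg, eval_add, eval_X, eval_C]
    ring_nf
  simpa [hQ, poch_natCast] using IsSkewRational.of_polynomial hswap

theorem isSkewRational_poch_div_poch_mul {y e f s : ℂ} {d : ℤ} (hx : x ∈ integerComplement)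
    (hxy : y = x + d) (hs_quot : s = x + y - 1) (hs_prod : s = e + f) (j : ℕ) :
    IsSkewRational s ((-1) ^ d)
      fun n ↦ poch x n / poch y n * (poch (-(n + e)) j * poch (n + f) j) := by
  subst hxy
  have hquot := isSkewRational_poch_div_poch hx d
  have hprod := isSkewRational_poch_neg_mul_poch e f j
  rw [show 2 * x + d - 1 = s by rw [hs_quot]; ring] at hquot
  rw [← hs_prod] at hprod
  simpa only [mul_one] using hquot.mul hprod

end Pochhammer

/-- The functions of the paper have `c = 1 / (2^j j! (β+1)_j)` and `c' = 1 / (2^j j! (-β+1)_j)`. -/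
theorem stmt17_general {α β ε : ℂ} (hε : ε ∈ Complex.integerComplement)
    (hεβ : ε + β ∈ Complex.integerComplement) {p q : ℤ} (hp : α - β = p) (hq : α + β = q)
    (j : ℕ) (c c' : ℂ) :
    IsSkewRational (2 * ε + α + β + 1) ((-1) ^ p) (fun n ↦
      c * (poch (ε + β + 1) n / poch (ε + α + 1) n *
        (poch (-(n + ε)) j * poch (n + (ε + α + β + 1)) j))) ∧
    IsSkewRational (2 * ε + α + β + 1) ((-1) ^ q) (fun n ↦
      c' * (poch (ε + 1) n / poch (ε + α + β + 1) n *
        (poch (-(n + (ε + α + β))) j * poch (n + (ε + 1)) j))) := by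
  have hε_one : ε + 1 ∈ Complex.integerComplement := by
    simpa using (Complex.add_intCast_mem_integerComplement 1).mpr hε
  have hεβ_one : ε + β + 1 ∈ Complex.integerComplement := by
    simpa using (Complex.add_intCast_mem_integerComplement 1).mpr hεβ
  constructor
  · exact .const_mul c <| isSkewRational_poch_div_poch_mul hεβ_one
      (by linear_combination hp) (by ring) (by ring) j
  · exact .const_mul c' <| isSkewRational_poch_div_poch_mul hε_one
      (by linear_combination hq) (by ring) (by ring) j

/-- For `α, β ∈ ℤ` and `0 ≤ j ≤ |β|−1`, the functions
`(−1)^n Φ₋^{(j)}(n)` and `(−1)^n Ψ₋^{(j)}(n)` are restrictions to `ℤ` of rational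
functions which are `(−1)^{α+β}`-skew-invariant under `I` (stated in
cross-multiplied polynomial form). -/
theorem stmt17 (α β ε : ℂ) (hgood : GoodParams α β ε)
    (a b : ℤ) (hα : α = (a : ℂ)) (hβ : β = (b : ℂ)) (j : ℕ) (hj : (j : ℤ) ≤ |b| - 1) :
    ∃ uN uD vN vD : Polynomial ℂ,
      (∀ n : ℤ, uD.eval (n : ℂ) ≠ 0) ∧ (∀ n : ℤ, vD.eval (n : ℂ) ≠ 0) ∧
      (∀ n : ℤ, uN.eval (n : ℂ) / uD.eval (n : ℂ)
        = (poch (ε + β + 1) n / poch (ε + α + 1) n) *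
            (poch (-((n : ℂ) + ε)) (j : ℤ) * poch ((n : ℂ) + ε + α + β + 1) (j : ℤ)) /
            ((2 : ℂ) ^ j * (j.factorial : ℂ) * poch (β + 1) (j : ℤ))) ∧
      (∀ n : ℤ, vN.eval (n : ℂ) / vD.eval (n : ℂ)
        = (poch (ε + 1) n / poch (ε + α + β + 1) n) *
            (poch (-((n : ℂ) + ε + α + β)) (j : ℤ) * poch ((n : ℂ) + ε + 1) (j : ℤ)) /
            ((2 : ℂ) ^ j * (j.factorial : ℂ) * poch (-β + 1) (j : ℤ))) ∧
      uN.comp (-Polynomial.X - Polynomial.C (2 * ε + α + β + 1)) * uD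
        = Polynomial.C ((-1 : ℂ) ^ (a + b)) *
            (uN * (uD.comp (-Polynomial.X - Polynomial.C (2 * ε + α + β + 1)))) ∧
      vN.comp (-Polynomial.X - Polynomial.C (2 * ε + α + β + 1)) * vD
        = Polynomial.C ((-1 : ℂ) ^ (a + b)) *
            (vN * (vD.comp (-Polynomial.X - Polynomial.C (2 * ε + α + β + 1)))) := by
  have hε : ε ∈ Complex.integerComplement := fun ⟨m, hm⟩ ↦ (hgood m).1 hm.symm
  have hεβ : ε + β ∈ Complex.integerComplement := fun ⟨m, hm⟩ ↦ (hgood m).2.2.1 hm.symm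
  have hsign : (-1 : ℂ) ^ (a - b) = (-1) ^ (a + b) := by
    rw [zpow_sub₀ (by simp), zpow_add₀ (by simp), div_eq_mul_inv, ← inv_zpow, inv_neg_one]
  obtain ⟨⟨uN, uD, huD, hu, hu_skew⟩, ⟨vN, vD, hvD, hv, hv_skew⟩⟩ :=
    stmt17_general (α := α) hε hεβ (p := a - b) (q := a + b) (by simp [hα, hβ]) (by simp [hα, hβ]) j
      (2 ^ j * j.factorial * poch (β + 1) j)⁻¹ (2 ^ j * j.factorial * poch (-β + 1) j)⁻¹
  rw [hsign] at hu_skew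
  refine ⟨uN, uD, vN, vD, huD, hvD, fun n ↦ ?_, fun n ↦ ?_, hu_skew, hv_skew⟩
  · simpa only [inv_mul_eq_div, add_assoc] using hu n
  · simpa only [inv_mul_eq_div, add_assoc] using hv n
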